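/- (Plug-in accuracy bound.) Let A, Y, W be random variables on a finite probability space with values in finite sets, with A taking values in a finite set 𝒜 with |𝒜| ≥ 2, and let g be a function from the value set of Y into 𝒜. Set Acc = 1 − P(g(Y) ≠ A) and C = H(Y | W). Let h ≥ 1 be a natural number (hop count), L > 0 a real number (context length), and β₀ ≥ 0, α > 0, γ ≥ 1 real parameters, and suppose the information demand satisfies H(A | W) = β₀ + α·L·γ^{h−1} and log₂(|𝒜| − 1) ≤ β₀ + α·L·γ^{h−1}. Then Acc ≤ min{ 1, (C + 1) / (β₀ + α·L·γ^{h−1}) }. -/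

import Mathlib

open scoped Classical
open Finset

namespace InfoQA

variable {Ω : Type*} [Fintype Ω]

/-- Probability of an event under a pmf `p` on a finite sample space. -/
noncomputable def pr (p : Ω → ℝ) (S : Ω → Prop) : ℝ :=
  ∑ ω, if S ω then p ω else 0

/-- Distribution of a random variable `X` under `p`. -/
noncomputable def distOf (p : Ω → ℝ) {α : Type*} (X : Ω → α) (a : α) : ℝ :=
  pr p (fun ω => X ω = a)

/-- Shannon entropy of a random variable (logarithm base 2). -/
noncomputable def H (p : Ω → ℝ) {α : Type*} [Fintype α] (X : Ω → α) : ℝ :=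
  -∑ a, distOf p X a * Real.logb 2 (distOf p X a)

/-- Conditional entropy `H(X | Z) = H(X, Z) - H(Z)` (base 2). -/
noncomputable def condH (p : Ω → ℝ) {α β : Type*} [Fintype α] [Fintype β]
    (X : Ω → α) (Z : Ω → β) : ℝ :=
  H p (fun ω => (X ω, Z ω)) - H p Z

/-- Conditional mutual information `I(X ; Y | Z) = H(X | Z) - H(X | (Y, Z))` (base 2). -/
noncomputable def condMI (p : Ω → ℝ) {α β γ : Type*} [Fintype α] [Fintype β] [Fintype γ]
    (X : Ω → α) (Y : Ω → β) (Z : Ω → γ) : ℝ :=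
  condH p X Z - condH p X (fun ω => (Y ω, Z ω))

/-- Binary entropy function (base 2); `Real.logb 2 0 = 0`, so `binEnt 0 = binEnt 1 = 0`. -/
noncomputable def binEnt (x : ℝ) : ℝ :=
  -(x * Real.logb 2 x) - (1 - x) * Real.logb 2 (1 - x)

end InfoQA

open InfoQA

namespace InfoQA

variable {Ω : Type*} [Fintype Ω] {p : Ω → ℝ}

theorem distOf_nonneg (hp : ∀ ω, 0 ≤ p ω) {α : Type*} (X : Ω → α) (a : α) :
    0 ≤ distOf p X a :=
  Finset.sum_nonneg fun ω _ => by split_ifs <;> simp [hp ω]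

theorem le_distOf_apply (hp : ∀ ω, 0 ≤ p ω) {α : Type*} (X : Ω → α) (ω : Ω) :
    p ω ≤ distOf p X (X ω) := by
  have := Finset.single_le_sum (f := fun ω' => if X ω' = X ω then p ω' else 0)
    (fun ω' _ => by split_ifs <;> simp [hp ω']) (Finset.mem_univ ω)
  simpa [distOf, pr] using this

theorem distOf_le_distOf_comp (hp : ∀ ω, 0 ≤ p ω) {α β : Type*} (X : Ω → α) (f : α → β) (a : α) :
    distOf p X a ≤ distOf p (fun ω => f (X ω)) (f a) := by
  refine Finset.sum_le_sum fun ω _ => ?_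
  by_cases hX : X ω = a
  · simp [hX]
  · simp only [hX, if_false]
    split_ifs <;> simp [hp ω]

theorem sum_distOf_mul (p : Ω → ℝ) {α : Type*} [Fintype α] (X : Ω → α) (f : α → ℝ) :
    ∑ a, distOf p X a * f a = ∑ ω, p ω * f (X ω) := by
  simp only [distOf, pr, Finset.sum_mul]
  rw [Finset.sum_comm]
  refine Finset.sum_congr rfl fun ω _ => ?_
  simp [ite_mul]

theorem H_eq_sum_sample (p : Ω → ℝ) {α : Type*} [Fintype α] (X : Ω → α) :
    H p X = -∑ ω, p ω * Real.logb 2 (distOf p X (X ω)) := by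
  rw [H, sum_distOf_mul p X fun a => Real.logb 2 (distOf p X a)]

/-- Entropy does not increase under a function of the random variable. -/
theorem H_comp_le (hp : ∀ ω, 0 ≤ p ω) {α β : Type*} [Fintype α] [Fintype β]
    (X : Ω → α) (f : α → β) : H p (fun ω => f (X ω)) ≤ H p X := by
  rw [H_eq_sum_sample, H_eq_sum_sample, neg_le_neg_iff]
  refine Finset.sum_le_sum fun ω _ => ?_
  rcases (hp ω).eq_or_lt with h0 | h0
  · simp [← h0]
  · exact mul_le_mul_of_nonneg_left (Real.logb_le_logb_of_le one_lt_two
      (h0.trans_le (le_distOf_apply hp X ω)) (distOf_le_distOf_comp hp X f _)) h0.le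

/-- Gibbs' inequality: the entropy is at most the cross entropy with respect to any
subprobability whose support contains that of the distribution. -/
theorem H_le_cross_entropy (hp : ∀ ω, 0 ≤ p ω) (hsum : ∑ ω, p ω = 1)
    {α : Type*} [Fintype α] (X : Ω → α) (Q : α → ℝ) (hQ : ∀ a, 0 ≤ Q a)
    (hQsum : ∑ a, Q a ≤ 1) (hsupp : ∀ a, 0 < distOf p X a → 0 < Q a) :
    H p X ≤ -∑ ω, p ω * Real.logb 2 (Q (X ω)) := by
  rw [← sum_distOf_mul p X fun a => Real.logb 2 (Q a), H, neg_le_neg_iff]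
  have hlog2 : 0 < Real.log 2 := Real.log_pos one_lt_two
  have hterm : ∀ a, distOf p X a * Real.logb 2 (Q a) - distOf p X a * Real.logb 2 (distOf p X a)
      ≤ (Q a - distOf p X a) / Real.log 2 := by
    intro a
    rcases (distOf_nonneg hp X a).eq_or_lt with h0 | h0
    · simpa [← h0] using div_nonneg (hQ a) hlog2.le
    · have hlog := Real.log_le_sub_one_of_pos (div_pos (hsupp a h0) h0)
      rw [Real.log_div (hsupp a h0).ne' h0.ne'] at hlog
      have hmul := mul_le_mul_of_nonneg_left hlog h0.le
      rw [mul_sub (distOf p X a) (Q a / _), mul_div_cancel₀ _ h0.ne', mul_one] at hmul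
      rw [← mul_sub, Real.logb, Real.logb, ← sub_div, ← mul_div_assoc]
      exact div_le_div_of_nonneg_right hmul hlog2.le
  have htotal : ∑ a, distOf p X a = 1 := by
    simpa [hsum] using sum_distOf_mul p X fun _ => 1
  have h := Finset.sum_le_sum fun a (_ : a ∈ Finset.univ) => hterm a
  rw [Finset.sum_sub_distrib, ← Finset.sum_div, Finset.sum_sub_distrib, htotal] at h
  have : (∑ a, Q a - 1) / Real.log 2 ≤ 0 :=
    div_nonpos_of_nonpos_of_nonneg (by linarith) hlog2.le
  linarith

/-- Fano's inequality, with the binary entropy of the error probability bounded by one. -/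
theorem H_pair_le_fano (hp : ∀ ω, 0 ≤ p ω) (hsum : ∑ ω, p ω = 1)
    {α β : Type*} [Fintype α] [Fintype β] (hcard : 2 ≤ Fintype.card α)
    (A : Ω → α) (Z : Ω → β) (f : β → α) :
    H p (fun ω => (A ω, Z ω)) ≤ H p Z + 1 +
      pr p (fun ω => f (Z ω) ≠ A ω) * Real.logb 2 ((Fintype.card α : ℝ) - 1) := by
  set m : ℝ := (Fintype.card α : ℝ) - 1
  have hm0 : 0 < m := by
    have : (2 : ℝ) ≤ Fintype.card α := by exact_mod_cast hcard
    linarith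
  let c : α → β → ℝ := fun a z => if f z ≠ a then 1 / (2 * m) else 1 / 2
  have hc : ∀ a z, 0 < c a z := fun a z => by
    dsimp only [c]; split_ifs <;> positivity
  have hcsum : ∀ z, ∑ a, c a z = 1 := by
    intro z
    have hne : ∑ a ∈ Finset.univ.erase (f z), c a z = m * (1 / (2 * m)) := by
      rw [Finset.sum_congr rfl (g := fun _ => 1 / (2 * m))
        fun a ha => if_pos (Finset.ne_of_mem_erase ha).symm, Finset.sum_const,
        Finset.card_erase_of_mem (Finset.mem_univ _), nsmul_eq_mul, Finset.card_univ,
        Nat.cast_sub (by omega), Nat.cast_one]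
    rw [← Finset.add_sum_erase _ _ (Finset.mem_univ (f z)), hne]
    simp only [c, ne_eq, not_true_eq_false, if_false]
    field_simp
    norm_num
  have hclog : ∀ a z, Real.logb 2 (c a z) = -1 - (if f z ≠ a then Real.logb 2 m else 0) := by
    intro a z
    dsimp only [c]
    split_ifs
    · rw [one_div, Real.logb_inv, Real.logb_mul two_ne_zero hm0.ne',
        Real.logb_self_eq_one one_lt_two]
      ring
    · rw [one_div, Real.logb_inv, Real.logb_self_eq_one one_lt_two, sub_zero]
  have hgibbs := H_le_cross_entropy hp hsum (fun ω => (A ω, Z ω))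
    (fun x => distOf p Z x.2 * c x.1 x.2)
    (fun x => mul_nonneg (distOf_nonneg hp Z _) (hc _ _).le)
    (by
      rw [Fintype.sum_prod_type_right]
      simp only [← Finset.mul_sum, hcsum]
      rw [sum_distOf_mul p Z fun _ => 1]
      simp [hsum])
    (fun x hx => mul_pos (hx.trans_le
      (distOf_le_distOf_comp hp (fun ω => (A ω, Z ω)) Prod.snd x)) (hc _ _))
  refine hgibbs.trans_eq ?_
  have hterm : ∀ ω, p ω * Real.logb 2 (distOf p Z (Z ω) * c (A ω) (Z ω)) =
      p ω * Real.logb 2 (distOf p Z (Z ω)) - p ω -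
        (if f (Z ω) ≠ A ω then p ω else 0) * Real.logb 2 m := by
    intro ω
    rcases (hp ω).eq_or_lt with h0 | h0
    · simp [← h0]
    · rw [Real.logb_mul (h0.trans_le (le_distOf_apply hp Z ω)).ne' (hc _ _).ne', hclog]
      split_ifs <;> ring
  simp only [hterm, Finset.sum_sub_distrib, ← Finset.sum_mul, hsum, H_eq_sum_sample p Z, pr]
  ring_nf

end InfoQA

/-- Plug-in accuracy bound: if `H(A | W) = β₀ + α·L·γ^{h−1}` and
`log₂(|𝒜| − 1) ≤ β₀ + α·L·γ^{h−1}`, then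
`Acc ≤ min{1, (C + 1)/(β₀ + α·L·γ^{h−1})}` with `C = H(Y | W)`. -/
theorem plug_in_accuracy_bound
    {Ω 𝒜 𝒴 𝒲 : Type*} [Fintype Ω] [Fintype 𝒜] [Fintype 𝒴] [Fintype 𝒲]
    (p : Ω → ℝ) (hp : ∀ ω, 0 ≤ p ω) (hsum : ∑ ω, p ω = 1)
    (hcard : 2 ≤ Fintype.card 𝒜)
    (A : Ω → 𝒜) (Y : Ω → 𝒴) (W : Ω → 𝒲) (g : 𝒴 → 𝒜)
    (h : ℕ) (hh : 1 ≤ h) (L : ℝ) (hL : 0 < L)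
    (β₀ α γ : ℝ) (hβ₀ : 0 ≤ β₀) (hα : 0 < α) (hγ : 1 ≤ γ)
    (hdemand : condH p A W = β₀ + α * L * γ ^ (h - 1))
    (hlog : Real.logb 2 ((Fintype.card 𝒜 : ℝ) - 1) ≤ β₀ + α * L * γ ^ (h - 1)) :
    1 - pr p (fun ω => g (Y ω) ≠ A ω) ≤
      min 1 ((condH p Y W + 1) / (β₀ + α * L * γ ^ (h - 1))) := by
  set β := β₀ + α * L * γ ^ (h - 1)
  have hβ : 0 < β := by positivity
  have herr : 0 ≤ pr p (fun ω => g (Y ω) ≠ A ω) :=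
    Finset.sum_nonneg fun ω _ => by split_ifs <;> simp [hp ω]
  refine le_min (by linarith) ((le_div_iff₀ hβ).2 ?_)
  have hfano := H_pair_le_fano hp hsum hcard A (fun ω => (Y ω, W ω)) fun z => g z.1
  have hmono := H_comp_le hp (fun ω => (A ω, (Y ω, W ω))) fun x => (x.1, x.2.2)
  have hmul := mul_le_mul_of_nonneg_left hlog herr
  simp only [condH] at hdemand ⊢
  dsimp only at hfano hmono
  linarith
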